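/- arXiv:1811.00303 — 16 statements merged into one kernel-verified Lean document; each statement's English description precedes it below -/
import Mathlib

section
/- Let X be a connected topological space and let G : X × X → ℝ be a continuous function satisfying the multiplicative Sincov inequality G(x,z) ≤ G(x,y) · G(y,z) for all x, y, z ∈ X. If G attains a non-positive value at some point of X × X, then G(x,y) ≤ 0 for all x, y ∈ X. -/
/-!
The intermediate value theorem is applied twice. If `G (x, y) > 0`, then
`G (x, y) ≤ G (x, x) * G (x, y)` forces `G (x, x) ≥ 1`. As `G` also takes a non-positive value,
connectedness of `X × X` gives a zero `(a, b)` of `G`, whence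
`G (a, a) ≤ G (a, b) * G (b, a) = 0`. But a diagonal value `d` satisfies `d ≤ d ^ 2`, so the
diagonal omits the value `1 / 2`, which contradicts connectedness of `X`.
-/


/-- If `X` is a connected topological space and `G : X × X → ℝ` is a continuous solution of
the multiplicative Sincov inequality which attains a non-positive value, then `G` is
non-positive everywhere. -/
theorem sincov_nonpos_of_connected {X : Type*} [TopologicalSpace X] [ConnectedSpace X]
    (G : X × X → ℝ) (hG : Continuous G)
    (hineq : ∀ x y z : X, G (x, z) ≤ G (x, y) * G (y, z))
    (hnp : ∃ p : X × X, G p ≤ 0) :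
    ∀ x y : X, G (x, y) ≤ 0 := by
  by_contra! h
  obtain ⟨x, y, hxy⟩ := h
  have hxx : 1 ≤ G (x, x) := by
    by_contra! hlt
    nlinarith [hineq x x y]
  obtain ⟨⟨a, b⟩, hab⟩ : (0 : ℝ) ∈ Set.range G :=
    mem_range_of_exists_le_of_exists_ge hG hnp ⟨(x, y), hxy.le⟩
  have haa : G (a, a) ≤ 0 := by
    simpa [hab] using hineq a b a
  obtain ⟨c, hc⟩ : (1 / 2 : ℝ) ∈ Set.range fun t => G (t, t) :=
    mem_range_of_exists_le_of_exists_ge (by fun_prop)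
      ⟨a, by linarith⟩ ⟨x, by linarith⟩
  have hcc := hineq c c c
  simp only at hc
  rw [hc] at hcc
  norm_num at hcc
end

section
/- Let X be a nonempty set and let G : X × X → ℝ satisfy the multiplicative Sincov inequality G(x,z) ≤ G(x,y) · G(y,z) for all x, y, z ∈ X. Assume that for every x ∈ X the section G(x,·) : X → ℝ has property (Z) and for every y ∈ X the section G(·,y) : X → ℝ has property (Z). If G attains a non-positive value at some point of X × X, then G(x,y) ≤ 0 for all x, y ∈ X. -/
/-!
A zero of `G` in a row or a column makes, by the Sincov inequality, every entry of that row or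
column non-positive. Hence, by property (Z), a row or column containing a positive value is
positive throughout. Starting from one positive value `G (a, b)`, column `b` is positive, and then
so is every row, since each row meets column `b`. Thus `G` is either positive everywhere or
non-positive everywhere.
-/

/-- Property (Z): if `f` attains a non-positive and a non-negative value, then `f` has a zero. -/
def PropertyZ {X : Type*} (f : X → ℝ) : Prop :=
  (∃ x y : X, f x ≤ 0 ∧ 0 ≤ f y) → ∃ z : X, f z = 0

/-- If all sections of a solution `G` of the multiplicative Sincov inequality have
property (Z) and `G` attains a non-positive value, then `G` is non-positive everywhere. -/
theorem sincov_nonpos_of_propertyZ {X : Type*} [Nonempty X] (G : X × X → ℝ)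
    (hineq : ∀ x y z : X, G (x, z) ≤ G (x, y) * G (y, z))
    (hZleft : ∀ x : X, PropertyZ (fun t => G (x, t)))
    (hZright : ∀ y : X, PropertyZ (fun t => G (t, y)))
    (hnp : ∃ p : X × X, G p ≤ 0) :
    ∀ x y : X, G (x, y) ≤ 0 := by
  by_contra! h
  obtain ⟨a, b, hab⟩ := h
  obtain ⟨⟨p, q⟩, hpq⟩ := hnp
  -- A positive entry forces its whole row to be positive: otherwise the row has a zero `G (c, w)`,
  -- and `G (c, d) ≤ G (c, w) * G (w, d) = 0`.
  have row : ∀ c d : X, 0 < G (c, d) → ∀ z : X, 0 < G (c, z) := by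
    intro c d hcd z
    by_contra! hz
    obtain ⟨w, hw⟩ := hZleft c ⟨z, d, hz, hcd.le⟩
    have := hineq c w d
    simp only at hw
    rw [hw, zero_mul] at this
    linarith
  have col : ∀ c d : X, 0 < G (c, d) → ∀ z : X, 0 < G (z, d) := by
    intro c d hcd z
    by_contra! hz
    obtain ⟨w, hw⟩ := hZright d ⟨z, c, hz, hcd.le⟩
    have := hineq c w d
    simp only at hw
    rw [hw, mul_zero] at this
    linarith
  exact absurd hpq (row p b (col a b hab p) q).not_ge
end

section
/- Let X be a nonempty set and let G : X × X → ℝ be a function with values in (0, +∞) satisfying the multiplicative Sincov inequality G(x,z) ≤ G(x,y) · G(y,z) for all x, y, z ∈ X. If G is bounded above, then there exists c ≥ 1 such that 1/c ≤ G(a,b) ≤ c for all a, b ∈ X. -/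
/-- A positive bounded solution of the multiplicative Sincov inequality has its values
in an interval `[1/c, c]` for some `c ≥ 1`. -/
theorem sincov_bounded_range {X : Type*} [Nonempty X] (G : X × X → ℝ)
    (hpos : ∀ x y : X, 0 < G (x, y))
    (hineq : ∀ x y z : X, G (x, z) ≤ G (x, y) * G (y, z))
    (hbdd : ∃ M : ℝ, ∀ x y : X, G (x, y) ≤ M) :
    ∃ c : ℝ, 1 ≤ c ∧ ∀ a b : X, 1 / c ≤ G (a, b) ∧ G (a, b) ≤ c := by
  obtain ⟨M, hM⟩ := hbdd
  -- Cancel the positive factor `G (a, a)` in `G (a, a) ≤ G (a, a) * G (a, a)`.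
  have hdiag : ∀ a, 1 ≤ G (a, a) := fun a =>
    le_of_mul_le_mul_left (by simpa using hineq a a a) (hpos a a)
  obtain ⟨x⟩ := ‹Nonempty X›
  have hM1 : 1 ≤ M := (hdiag x).trans (hM x x)
  refine ⟨M, hM1, fun a b => ⟨?_, hM a b⟩⟩
  rw [div_le_iff₀ (by linarith)]
  calc 1 ≤ G (a, a) := hdiag a
    _ ≤ G (a, b) * G (b, a) := hineq a b a
    _ ≤ G (a, b) * M := mul_le_mul_of_nonneg_left (hM b a) (hpos a b).le
end

section
/- Let X be a nonempty set and let G : X × X → ℝ be a function with values in (0, +∞) satisfying the multiplicative Sincov inequality G(x,z) ≤ G(x,y) · G(y,z) for all x, y, z ∈ X. Define G̃ : X × X → ℝ by G̃(x,y) = sup { G(a,y)/G(a,x) : a ∈ X }. Then: (i) 1/G(y,x) ≤ G̃(x,y) ≤ G(x,y) for all x, y ∈ X; (ii) G̃(x,x) = 1 for all x ∈ X; (iii) if G(x,x) = 1 for all x ∈ X, then G̃ = G on X × X; (iv) G̃ satisfies the multiplicative Sincov inequality G̃(x,z) ≤ G̃(x,y) · G̃(y,z) for all x, y, z ∈ X.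 -/
/-!
The Sincov inequality `G (a, y) ≤ G (a, x) * G (x, y)` bounds every quotient `G (a, y) / G (a, x)`
by `G (x, y)`, so each supremum is a genuine one and is at most `G (x, y)`. The lower bounds come
from single quotients: `a = y` together with `1 ≤ G (y, y)` gives `1 / G (y, x)`, and `a = x` gives
`G (x, y)` when the diagonal is `1`. The Sincov inequality for the suprema follows by factoring
`G (a, z) / G (a, x)` through `G (a, y)` and bounding the two factors separately.
-/

open scoped BigOperators

/-- Properties of the map `G̃(x,y) = sup { G(a,y)/G(a,x) : a ∈ X }` associated with a
positive solution `G` of the multiplicative Sincov inequality. -/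
theorem sincov_tilde_properties {X : Type*} [Nonempty X] (G : X × X → ℝ)
    (hpos : ∀ x y : X, 0 < G (x, y))
    (hineq : ∀ x y z : X, G (x, z) ≤ G (x, y) * G (y, z)) :
    -- (i)
    (∀ x y : X, 1 / G (y, x) ≤ (⨆ a : X, G (a, y) / G (a, x)) ∧
      (⨆ a : X, G (a, y) / G (a, x)) ≤ G (x, y)) ∧
    -- (ii)
    (∀ x : X, (⨆ a : X, G (a, x) / G (a, x)) = 1) ∧
    -- (iii)
    ((∀ x : X, G (x, x) = 1) → ∀ x y : X, (⨆ a : X, G (a, y) / G (a, x)) = G (x, y)) ∧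
    -- (iv)
    (∀ x y z : X, (⨆ a : X, G (a, z) / G (a, x)) ≤
      (⨆ a : X, G (a, y) / G (a, x)) * (⨆ a : X, G (a, z) / G (a, y))) := by
  -- Each quotient is at most `G (x, y)`, by the Sincov inequality through `x`.
  have hle : ∀ x y a : X, G (a, y) / G (a, x) ≤ G (x, y) := fun x y a => by
    rw [div_le_iff₀ (hpos a x), mul_comm]
    exact hineq a x y
  have hbdd : ∀ x y : X, BddAbove (Set.range fun a : X => G (a, y) / G (a, x)) :=
    fun x y => ⟨G (x, y), Set.forall_mem_range.2 (hle x y)⟩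
  have hsup : ∀ x y a : X, G (a, y) / G (a, x) ≤ ⨆ b : X, G (b, y) / G (b, x) :=
    fun x y a => le_ciSup (hbdd x y) a
  -- Cancel `G (x, x)` in `G (x, x) ≤ G (x, x) * G (x, x)`.
  have hdiag : ∀ x : X, 1 ≤ G (x, x) := fun x =>
    (le_mul_iff_one_le_right (hpos x x)).1 (hineq x x x)
  refine ⟨fun x y => ⟨?_, ciSup_le (hle x y)⟩, fun x => ?_, fun h x y => ?_, fun x y z => ?_⟩
  · exact (div_le_div_of_nonneg_right (hdiag y) (hpos y x).le).trans (hsup x y y)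
  · simp [div_self (hpos _ x).ne']
  · refine le_antisymm (ciSup_le (hle x y)) ?_
    simpa [h x] using hsup x y x
  · refine ciSup_le fun a => ?_
    have hsplit : G (a, z) / G (a, x) = G (a, y) / G (a, x) * (G (a, z) / G (a, y)) := by
      have := (hpos a y).ne'
      have := (hpos a x).ne'
      field_simp
    rw [hsplit]
    have hnonneg : 0 ≤ G (a, y) / G (a, x) := (div_pos (hpos a y) (hpos a x)).le
    exact mul_le_mul (hsup x y a) (hsup y z a) (div_pos (hpos a z) (hpos a y)).le
      (hnonneg.trans (hsup x y a))
end

section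
/- Let X be a topological space and let G : X × X → ℝ be a function with values in (0, +∞) satisfying the multiplicative Sincov inequality G(x,z) ≤ G(x,y) · G(y,z) for all x, y, z ∈ X. Assume that the family of functions { G(x,·) : x ∈ X } is equicontinuous at every point of X. Then the function G̃ : X × X → ℝ defined by G̃(x,y) = sup { G(a,y)/G(a,x) : a ∈ X } is continuous at every point of the diagonal Δ = { (x,x) : x ∈ X } of X × X. -/
open Filter

/-! The supremum equals `1` at `(x, x)`. Equicontinuity at `x` gives a neighbourhood `U` of `x` such
that for `(y, z) ∈ U ×ˢ U` all the ratios `G (a, z) / G (a, y)` are within `ε / 2` of `1`, uniformly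
in `a`. Their supremum is then bounded above and also within `ε / 2` of `1`. -/

/-- If the family `{ G(x,·) : x ∈ X }` is equicontinuous at every point (in the
multiplicative sense), then `G̃(x,y) = sup { G(a,y)/G(a,x) : a ∈ X }` is continuous at
every point of the diagonal. -/
theorem sincov_tilde_continuousAt_diagonal {X : Type*} [TopologicalSpace X] [Nonempty X]
    (G : X × X → ℝ)
    (hpos : ∀ x y : X, 0 < G (x, y))
    (hineq : ∀ x y z : X, G (x, z) ≤ G (x, y) * G (y, z))
    (hequi : ∀ y : X, ∀ ε > (0 : ℝ), ∃ U ∈ nhds y,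
      ∀ y₁ ∈ U, ∀ y₂ ∈ U, ∀ x : X, |G (x, y₁) / G (x, y₂) - 1| < ε) :
    ∀ x : X, ContinuousAt (fun p : X × X => ⨆ a : X, G (a, p.2) / G (a, p.1)) (x, x) := by
  intro x
  -- On the diagonal every ratio is `G (a, x) / G (a, x) = 1`, so the supremum is `1`.
  have hdiag : ⨆ a : X, G (a, x) / G (a, x) = 1 := by
    simp [div_self (hpos _ x).ne']
  refine Metric.continuousAt_iff'.2 fun ε hε => ?_
  -- Passing to the supremum makes strict bounds weak, hence `ε / 2`.
  obtain ⟨U, hU, hUε⟩ := hequi x (ε / 2) (half_pos hε)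
  filter_upwards [prod_mem_nhds hU hU] with p hp
  have hb : ∀ a : X, |G (a, p.2) / G (a, p.1) - 1| < ε / 2 := hUε p.2 hp.2 p.1 hp.1
  have hle : ∀ a : X, G (a, p.2) / G (a, p.1) ≤ 1 + ε / 2 := fun a => by
    linarith [(abs_lt.1 (hb a)).2]
  have hupper : ⨆ a : X, G (a, p.2) / G (a, p.1) ≤ 1 + ε / 2 := ciSup_le hle
  have hbdd : BddAbove (Set.range fun a : X => G (a, p.2) / G (a, p.1)) :=
    ⟨1 + ε / 2, Set.forall_mem_range.2 hle⟩
  have hlower : G (x, p.2) / G (x, p.1) ≤ ⨆ a : X, G (a, p.2) / G (a, p.1) :=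
    le_ciSup hbdd x
  rw [Real.dist_eq, hdiag, abs_lt]
  constructor <;> linarith [(abs_lt.1 (hb x)).1]
end

section
/- Let X be a countable nonempty set, let (aₙ) be a sequence in X, and let G : X × X → ℝ be a function with values in (0, +∞) satisfying the multiplicative Sincov inequality G(x,z) ≤ G(x,y) · G(y,z) for all x, y, z ∈ X. Then there exists a subsequence (αₙ) of (aₙ) such that for every a, b ∈ X the limit S(b,a) = limₙ→∞ G(αₙ,a)/G(αₙ,b) exists in (0, +∞), and the function S : X × X → (0, +∞) so defined satisfies the multiplicative Sincov equation S(x,z) = S(x,y) · S(y,z) for all x, y, z ∈ X. -/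
/-!
The Sincov inequality confines the quotient `G (t, c) / G (t, b)` to the compact interval
`[(G (c, b))⁻¹, G (b, c)]`, whose bounds are positive and independent of `t`. As `X × X` is
countable, the product of these intervals is compact and first countable, hence sequentially
compact by Tychonoff's theorem, so one subsequence makes all quotients converge simultaneously.
The limits are positive because the lower bounds are, and the Sincov equation is the limit of
`G (t, z) / G (t, x) = (G (t, y) / G (t, x)) * (G (t, z) / G (t, y))`.
-/

open Filter Topology

/-- For a countable set `X`, a sequence `a : ℕ → X` and a positive solution `G` of the
multiplicative Sincov inequality, there is a subsequence `(a ∘ φ)` such that the limits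
`S(b,a') = lim_n G(a (φ n), a') / G(a (φ n), b)` all exist, are positive, and `S` solves
the multiplicative Sincov equation. -/
theorem sincov_limit_subsequence {X : Type*} [Countable X] [Nonempty X]
    (a : ℕ → X) (G : X × X → ℝ)
    (hpos : ∀ x y : X, 0 < G (x, y))
    (hineq : ∀ x y z : X, G (x, z) ≤ G (x, y) * G (y, z)) :
    ∃ φ : ℕ → ℕ, StrictMono φ ∧ ∃ S : X × X → ℝ,
      (∀ x y : X, 0 < S (x, y)) ∧
      (∀ b c : X, Tendsto (fun n => G (a (φ n), c) / G (a (φ n), b)) atTop (𝓝 (S (b, c)))) ∧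
      (∀ x y z : X, S (x, z) = S (x, y) * S (y, z)) := by
  have hmem : ∀ n, (fun p : X × X => G (a n, p.2) / G (a n, p.1)) ∈
      Set.univ.pi fun p : X × X => Set.Icc (G (p.2, p.1))⁻¹ (G (p.1, p.2)) := by
    rintro n ⟨b, c⟩ -
    constructor
    · rw [le_div_iff₀ (hpos _ _), inv_mul_le_iff₀ (hpos _ _), mul_comm]
      exact hineq _ _ _
    · rw [div_le_iff₀ (hpos _ _), mul_comm]
      exact hineq _ _ _
  obtain ⟨S, hS, φ, hφ, hlim⟩ :=
    (isCompact_univ_pi fun p : X × X =>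
      (isCompact_Icc : IsCompact (Set.Icc (G (p.2, p.1))⁻¹ (G (p.1, p.2))))).tendsto_subseq hmem
  have hconv : ∀ b c : X,
      Tendsto (fun n => G (a (φ n), c) / G (a (φ n), b)) atTop (𝓝 (S (b, c))) :=
    fun b c => tendsto_pi_nhds.mp hlim (b, c)
  refine ⟨φ, hφ, S, fun x y => ?_, hconv, fun x y z => ?_⟩
  · exact (inv_pos.mpr (hpos y x)).trans_le (hS (x, y) trivial).1
  · refine tendsto_nhds_unique (hconv x z) (((hconv x y).mul (hconv y z)).congr fun n => ?_)
    have hy := (hpos (a (φ n)) y).ne'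
    field_simp
end

section
/- Let X be a countable nonempty set, let (x₀,y₀) ∈ X × X, and let G : X × X → ℝ be a function with values in (0, +∞) satisfying the multiplicative Sincov inequality G(x,z) ≤ G(x,y) · G(y,z) for all x, y, z ∈ X. Then there exists a function S : X × X → (0, +∞) such that S satisfies the multiplicative Sincov equation S(x,z) = S(x,y) · S(y,z) for all x, y, z ∈ X, S(x₀,y₀) = sup { G(a,y₀)/G(a,x₀) : a ∈ X }, and 1/G(y,x) ≤ S(x,y) ≤ G(x,y) for all x, y ∈ X. -/
/-!
Replacing the diagonal values of `G` by `1` gives a function `H ≤ G` that still satisfies the Sincov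
inequality. The supremum `M` lies between `1 / H (y₀, x₀)` and `H (x₀, y₀)`, so prescribing the
values `1` at `x₀` and `M` at `y₀` is compatible with the bound `f y ≤ f x * H (x, y)`. The McShane
type extension `f x = min (H (x₀, x)) (M * H (y₀, x))` takes these two values and satisfies the
bound everywhere, and `S (x, y) = f y / f x` is the required solution.
-/


/-- For a countable set `X`, a point `(x₀, y₀)` and a positive solution `G` of the
multiplicative Sincov inequality, there is a positive solution `S` of the multiplicative
Sincov equation with `S(x₀,y₀) = sup { G(a,y₀)/G(a,x₀) : a ∈ X }` and
`1/G(y,x) ≤ S(x,y) ≤ G(x,y)` everywhere. -/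
theorem sincov_solution_below {X : Type*} [Countable X] [Nonempty X]
    (x₀ y₀ : X) (G : X × X → ℝ)
    (hpos : ∀ x y : X, 0 < G (x, y))
    (hineq : ∀ x y z : X, G (x, z) ≤ G (x, y) * G (y, z)) :
    ∃ S : X × X → ℝ,
      (∀ x y : X, 0 < S (x, y)) ∧
      (∀ x y z : X, S (x, z) = S (x, y) * S (y, z)) ∧
      S (x₀, y₀) = (⨆ a : X, G (a, y₀) / G (a, x₀)) ∧
      (∀ x y : X, 1 / G (y, x) ≤ S (x, y) ∧ S (x, y) ≤ G (x, y)) := by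
  classical
  obtain ⟨H, hH⟩ : ∃ H : X → X → ℝ, H = fun x y => if x = y then 1 else G (x, y) := ⟨_, rfl⟩
  have H_self : ∀ x, H x x = 1 := fun x => by simp [hH]
  have H_ne : ∀ x y, x ≠ y → H x y = G (x, y) := fun x y h => by simp [hH, h]
  have H_pos : ∀ x y, 0 < H x y := fun x y => by
    by_cases h : x = y
    · subst h; rw [H_self]; exact one_pos
    · rw [H_ne x y h]; exact hpos x y
  have G_diag : ∀ x, 1 ≤ G (x, x) := fun x =>
    (le_mul_iff_one_le_right (hpos x x)).1 (hineq x x x)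
  have H_le : ∀ x y, H x y ≤ G (x, y) := fun x y => by
    by_cases h : x = y
    · subst h; rw [H_self]; exact G_diag x
    · rw [H_ne x y h]
  have G_le : ∀ a x y, G (a, y) ≤ G (a, x) * H x y := fun a x y => by
    by_cases h : x = y
    · subst h; rw [H_self, mul_one]
    · rw [H_ne x y h]; exact hineq a x y
  have H_tri : ∀ x y z, H x z ≤ H x y * H y z := fun x y z => by
    by_cases hxy : x = y
    · subst hxy; rw [H_self, one_mul]
    · rw [H_ne x y hxy]
      exact (H_le x z).trans (G_le x y z)
  obtain ⟨M, hM⟩ : ∃ M : ℝ, M = ⨆ a : X, G (a, y₀) / G (a, x₀) := ⟨_, rfl⟩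
  have quot_le : ∀ a, G (a, y₀) / G (a, x₀) ≤ H x₀ y₀ := fun a => by
    rw [div_le_iff₀' (hpos a x₀)]; exact G_le a x₀ y₀
  have M_le : M ≤ H x₀ y₀ := hM ▸ ciSup_le quot_le
  have quot_le_M : G (x₀, y₀) / G (x₀, x₀) ≤ M := by
    rw [hM]
    exact le_ciSup (f := fun a => G (a, y₀) / G (a, x₀))
      ⟨H x₀ y₀, by rintro _ ⟨a, rfl⟩; exact quot_le a⟩ x₀
  have M_pos : 0 < M := (div_pos (hpos _ _) (hpos _ _)).trans_le quot_le_M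
  have one_le : 1 ≤ M * H y₀ x₀ := by
    refine le_trans ?_ (mul_le_mul_of_nonneg_right quot_le_M (H_pos y₀ x₀).le)
    rw [div_mul_eq_mul_div, one_le_div (hpos _ _)]
    exact G_le x₀ y₀ x₀
  obtain ⟨f, hf⟩ : ∃ f : X → ℝ, f = fun x => min (H x₀ x) (M * H y₀ x) := ⟨_, rfl⟩
  have f_pos : ∀ x, 0 < f x := fun x => by
    rw [hf]; exact lt_min (H_pos _ _) (mul_pos M_pos (H_pos _ _))
  have f_x₀ : f x₀ = 1 := by
    simp only [hf, H_self]; exact min_eq_left one_le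
  have f_y₀ : f y₀ = M := by
    simp only [hf, H_self, mul_one]; exact min_eq_right M_le
  have f_le : ∀ x y, f y ≤ f x * H x y := fun x y => by
    simp only [hf]
    rw [min_mul_of_nonneg _ _ (H_pos x y).le, mul_assoc]
    exact min_le_min (H_tri _ _ _) (mul_le_mul_of_nonneg_left (H_tri _ _ _) M_pos.le)
  have f_le_G : ∀ x y, f y ≤ f x * G (x, y) := fun x y =>
    (f_le x y).trans (mul_le_mul_of_nonneg_left (H_le x y) (f_pos x).le)
  refine ⟨fun p => f p.2 / f p.1, fun x y => div_pos (f_pos y) (f_pos x), fun x y z => ?_, ?_,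
    fun x y => ⟨?_, ?_⟩⟩
  · have hx := (f_pos x).ne'
    have hy := (f_pos y).ne'
    field_simp
  · simp only [f_x₀, f_y₀, div_one, hM]
  · rw [div_le_div_iff₀ (hpos y x) (f_pos x), one_mul]; exact f_le_G y x
  · rw [div_le_iff₀' (f_pos x)]; exact f_le_G x y
end

section
/- Let X be a separable topological space, let (x₀,y₀) ∈ X × X, and let G : X × X → ℝ be a continuous function with values in (0, +∞) satisfying the multiplicative Sincov inequality G(x,z) ≤ G(x,y) · G(y,z) for all x, y, z ∈ X and such that G(x,x) = 1 for all x ∈ X. Then there exists a function S : X × X → (0, +∞) such that S satisfies the multiplicative Sincov equation S(x,z) = S(x,y) · S(y,z) for all x, y, z ∈ X, S(x₀,y₀) = G(x₀,y₀), and 1/G(y,x) ≤ S(x,y) ≤ G(x,y) for all x, y ∈ X. -/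
/-- Theorem 2: for a separable topological space `X` and a continuous positive solution `G`
of the multiplicative Sincov inequality with `G = 1` on the diagonal, and a point
`(x₀, y₀)`, there is a positive solution `S` of the multiplicative Sincov equation with
`S(x₀,y₀) = G(x₀,y₀)` and `1/G(y,x) ≤ S(x,y) ≤ G(x,y)` everywhere. -/
theorem sincov_solution_below_separable {X : Type*} [TopologicalSpace X]
    [TopologicalSpace.SeparableSpace X]
    (x₀ y₀ : X) (G : X × X → ℝ) (hG : Continuous G)
    (hpos : ∀ x y : X, 0 < G (x, y))
    (hineq : ∀ x y z : X, G (x, z) ≤ G (x, y) * G (y, z))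
    (hdiag : ∀ x : X, G (x, x) = 1) :
    ∃ S : X × X → ℝ,
      (∀ x y : X, 0 < S (x, y)) ∧
      (∀ x y z : X, S (x, z) = S (x, y) * S (y, z)) ∧
      S (x₀, y₀) = G (x₀, y₀) ∧
      (∀ x y : X, 1 / G (y, x) ≤ S (x, y) ∧ S (x, y) ≤ G (x, y)) := by
  -- The quotient `f x / f y` solves the equation for every positive `f`. For `f = G (·, y₀)` the
  -- bounds are `hineq` with last argument `y₀`, and the value at `(x₀, y₀)` is `hdiag y₀`.
  refine ⟨fun p => G (p.1, y₀) / G (p.2, y₀), fun x y => div_pos (hpos _ _) (hpos _ _),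
    fun x y z => ?_, by simp [hdiag], fun x y => ⟨?_, ?_⟩⟩
  · exact (div_mul_div_cancel₀ (hpos y y₀).ne').symm
  · rw [div_le_div_iff₀ (hpos y x) (hpos y y₀), one_mul, mul_comm]
    exact hineq y x y₀
  · exact (div_le_iff₀ (hpos y y₀)).2 (hineq x y y₀)
end

section
/- Let X be a topological space and let G : X × X → ℝ be a continuous function with values in (0, +∞) satisfying the multiplicative Sincov inequality G(x,z) ≤ G(x,y) · G(y,z) for all x, y, z ∈ X and such that G(x,x) = 1 for all x ∈ X. Then the family of functions { G(x,·) : x ∈ X } is equicontinuous at every point of X; more precisely, for every a ∈ X and every ε > 0 there exists a neighbourhood U of a such that |G(x,a')/G(x,a) − 1| < ε for all a' ∈ U and all x ∈ X. -/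
/-!
Writing `b` for a point near `a`, the Sincov inequality along `x, a, b` divided by `G (x, a)`, and
along `x, b, a` divided by `G (x, a) * G (b, a)`, gives
`(G (b, a))⁻¹ ≤ G (x, b) / G (x, a) ≤ G (a, b)`.
Both bounds are independent of `x`, continuous in `b`, and equal to `1` at `b = a`, so the quotient
is squeezed to `1` uniformly in `x`.
-/

/-- If `G` is a continuous positive solution of the multiplicative Sincov inequality with
`G = 1` on the diagonal, then the family `{ G(x,·) : x ∈ X }` is equicontinuous: for every
`a` and `ε > 0` there is a neighbourhood `U` of `a` with `|G(x,a')/G(x,a) - 1| < ε` for all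
`a' ∈ U` and all `x`. -/
theorem sincov_equicontinuous {X : Type*} [TopologicalSpace X]
    (G : X × X → ℝ) (hG : Continuous G)
    (hpos : ∀ x y : X, 0 < G (x, y))
    (hineq : ∀ x y z : X, G (x, z) ≤ G (x, y) * G (y, z))
    (hdiag : ∀ x : X, G (x, x) = 1) :
    ∀ a : X, ∀ ε > (0 : ℝ), ∃ U ∈ nhds a,
      ∀ a' ∈ U, ∀ x : X, |G (x, a') / G (x, a) - 1| < ε := by
  intro a ε hε
  have h_up : ∀ᶠ a' in nhds a, G (a, a') < 1 + ε := by
    have hc : Continuous fun a' => G (a, a') := by fun_prop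
    exact hc.continuousAt.eventually_lt_const (by simp only [hdiag]; linarith)
  have h_low : ∀ᶠ a' in nhds a, 1 - ε < (G (a', a))⁻¹ := by
    have hc : Continuous fun a' => (G (a', a))⁻¹ :=
      Continuous.inv₀ (by fun_prop) fun a' => (hpos a' a).ne'
    exact hc.continuousAt.eventually_const_lt (by simp only [hdiag, inv_one]; linarith)
  refine ⟨_, h_up.and h_low, ?_⟩
  rintro a' ⟨hu, hl⟩ x
  have h1 : G (x, a') / G (x, a) ≤ G (a, a') := by
    rw [div_le_iff₀ (hpos x a), mul_comm]
    exact hineq x a a'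
  have h2 : (G (a', a))⁻¹ ≤ G (x, a') / G (x, a) := by
    rw [le_div_iff₀ (hpos x a), inv_mul_le_iff₀ (hpos a' a), mul_comm]
    exact hineq x a' a
  rw [abs_lt]
  constructor <;> linarith
end

section
/- Let X be a separable topological space and let G : X × X → ℝ be a continuous function with values in (0, +∞) satisfying the multiplicative Sincov inequality G(x,z) ≤ G(x,y) · G(y,z) for all x, y, z ∈ X and such that G(x,x) = 1 for all x ∈ X. Then for all a, b ∈ X one has G(a,b) = sup { f(a)/f(b) : f ∈ 𝒢(G) }, where 𝒢(G) = { f : X → (0, +∞) : f(x)/f(y) ≤ G(x,y) for all x, y ∈ X }. -/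
/-- Representation of continuous positive solutions of the multiplicative Sincov inequality
on a separable space: `G(a,b) = sup { f(a)/f(b) : f ∈ 𝒢(G) }`. -/
theorem sincov_sup_representation {X : Type*} [TopologicalSpace X]
    [TopologicalSpace.SeparableSpace X]
    (G : X × X → ℝ) (hG : Continuous G)
    (hpos : ∀ x y : X, 0 < G (x, y))
    (hineq : ∀ x y z : X, G (x, z) ≤ G (x, y) * G (y, z))
    (hdiag : ∀ x : X, G (x, x) = 1) :
    ∀ a b : X, G (a, b) = sSup { r : ℝ | ∃ f : X → ℝ,
      (∀ x : X, 0 < f x) ∧ (∀ x y : X, f x / f y ≤ G (x, y)) ∧ r = f a / f b } := by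
  intro a b
  -- The supremum is attained at `f = G(·, b)`: membership in `𝒢(G)` is the Sincov inequality,
  -- and `f b = 1`.
  refine (IsGreatest.csSup_eq ⟨?_, ?_⟩).symm
  · refine ⟨fun x => G (x, b), fun x => hpos x b, fun x y => ?_, ?_⟩
    · exact (div_le_iff₀ (hpos y b)).2 (hineq x y b)
    · simp [hdiag]
  · rintro r ⟨f, -, hf, rfl⟩
    exact hf a b
end

section
/- Let X be a nonempty set and let 𝒢 be a nonempty family of functions f : X → (0, +∞) such that for every a, b ∈ X the set { f(a)/f(b) : f ∈ 𝒢 } is bounded above. Define G : X × X → (0, +∞) by G(a,b) = sup { f(a)/f(b) : f ∈ 𝒢 }. Then G satisfies the multiplicative Sincov inequality G(x,z) ≤ G(x,y) · G(y,z) for all x, y, z ∈ X, G(x,x) = 1 for all x ∈ X, and 𝒢 ⊆ 𝒢(G), where 𝒢(G) = { f : X → (0, +∞) : f(x)/f(y) ≤ G(x,y) for all x, y ∈ X }. -/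
/-!
Each quotient splits as `f x / f z = (f x / f y) * (f y / f z)`, and both factors are positive and
bounded by the corresponding suprema; taking the supremum over `f` on the left gives the Sincov
inequality. On the diagonal every quotient is `1`. Boundedness makes the real `sSup` a genuine
upper bound, and nonemptiness of the family gives positivity and the least-upper-bound property.
-/

/-- Converse part of the sup-representation: if `𝒢` is a nonempty family of positive
functions with all quotient sets bounded above, then `G(a,b) = sup { f(a)/f(b) : f ∈ 𝒢 }`
solves the multiplicative Sincov inequality, equals `1` on the diagonal, and `𝒢 ⊆ 𝒢(G)`. -/
theorem sincov_sup_converse {X : Type*} [Nonempty X]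
    (𝒢 : Set (X → ℝ)) (h𝒢ne : 𝒢.Nonempty)
    (h𝒢pos : ∀ f ∈ 𝒢, ∀ x : X, 0 < f x)
    (hbdd : ∀ a b : X, BddAbove { r : ℝ | ∃ f ∈ 𝒢, r = f a / f b })
    (G : X × X → ℝ)
    (hGdef : ∀ a b : X, G (a, b) = sSup { r : ℝ | ∃ f ∈ 𝒢, r = f a / f b }) :
    (∀ x y : X, 0 < G (x, y)) ∧
    (∀ x y z : X, G (x, z) ≤ G (x, y) * G (y, z)) ∧
    (∀ x : X, G (x, x) = 1) ∧
    (∀ f ∈ 𝒢, ∀ x y : X, f x / f y ≤ G (x, y)) := by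
  have hle : ∀ f ∈ 𝒢, ∀ x y : X, f x / f y ≤ G (x, y) := fun f hf x y => by
    rw [hGdef]
    exact le_csSup (hbdd x y) ⟨f, hf, rfl⟩
  have hlub : ∀ (x y : X) (c : ℝ), (∀ f ∈ 𝒢, f x / f y ≤ c) → G (x, y) ≤ c := fun x y c hc => by
    rw [hGdef]
    obtain ⟨f, hf⟩ := h𝒢ne
    refine csSup_le ⟨_, f, hf, rfl⟩ ?_
    rintro r ⟨g, hg, rfl⟩
    exact hc g hg
  have hpos : ∀ x y : X, 0 < G (x, y) := fun x y => by
    obtain ⟨f, hf⟩ := h𝒢ne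
    exact (div_pos (h𝒢pos f hf x) (h𝒢pos f hf y)).trans_le (hle f hf x y)
  refine ⟨hpos, fun x y z => hlub x z _ fun f hf => ?_, fun x => le_antisymm ?_ ?_, hle⟩
  · calc f x / f z = f x / f y * (f y / f z) :=
          (div_mul_div_cancel₀ (h𝒢pos f hf y).ne').symm
      _ ≤ G (x, y) * G (y, z) :=
          mul_le_mul (hle f hf x y) (hle f hf y z)
            (div_pos (h𝒢pos f hf y) (h𝒢pos f hf z)).le (hpos x y).le
  · exact hlub x x 1 fun f hf => (div_self (h𝒢pos f hf x).ne').le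
  · obtain ⟨f, hf⟩ := h𝒢ne
    exact (div_self (h𝒢pos f hf x).ne').symm.le.trans (hle f hf x x)
end

section
/- Let X be a separable topological space and let F : X × X → ℝ be a continuous function with values in (0, +∞) satisfying the reverse multiplicative Sincov inequality F(x,z) ≥ F(x,y) · F(y,z) for all x, y, z ∈ X and such that F(x,x) = 1 for all x ∈ X. Then for all a, b ∈ X one has F(a,b) = inf { f(a)/f(b) : f ∈ ℱ(F) }, where ℱ(F) = { f : X → (0, +∞) : f(x)/f(y) ≥ F(x,y) for all x, y ∈ X }. -/
/-- Representation of continuous positive solutions of the reverse multiplicative Sincov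
inequality on a separable space: `F(a,b) = inf { f(a)/f(b) : f ∈ ℱ(F) }`. -/
theorem sincov_inf_representation {X : Type*} [TopologicalSpace X]
    [TopologicalSpace.SeparableSpace X]
    (F : X × X → ℝ) (hF : Continuous F)
    (hpos : ∀ x y : X, 0 < F (x, y))
    (hineq : ∀ x y z : X, F (x, z) ≥ F (x, y) * F (y, z))
    (hdiag : ∀ x : X, F (x, x) = 1) :
    ∀ a b : X, F (a, b) = sInf { r : ℝ | ∃ f : X → ℝ,
      (∀ x : X, 0 < f x) ∧ (∀ x y : X, f x / f y ≥ F (x, y)) ∧ r = f a / f b } := by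
  intro a b
  -- The infimum is a minimum, attained at the section `f = F (·, b)`.
  symm
  apply IsLeast.csInf_eq
  refine ⟨⟨fun x => F (x, b), fun x => hpos x b, fun x y => ?_, ?_⟩, ?_⟩
  · exact (le_div_iff₀ (hpos y b)).2 (hineq x y b)
  · simp [hdiag b]
  · rintro r ⟨f, -, hf, rfl⟩
    exact hf a b
end

section
/- Let X be a nonempty set and let F : X × X → ℝ satisfy the reverse multiplicative Sincov inequality F(x,z) ≥ F(x,y) · F(y,z) for all x, y, z ∈ X. Assume that for every x, y ∈ X at least one of the mappings F(x,·) : X → ℝ and F(·,y) : X → ℝ has property (Z). Then F(x,y) ≥ 0 for all x, y ∈ X. -/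
/-- If `F` solves the reverse multiplicative Sincov inequality and for every `x, y` at least
one of the sections `F(x,·)`, `F(·,y)` has property (Z), then `F` is non-negative. -/
theorem reverse_sincov_nonneg {X : Type*} [Nonempty X] (F : X × X → ℝ)
    (hineq : ∀ x y z : X, F (x, z) ≥ F (x, y) * F (y, z))
    (hZ : ∀ x y : X, PropertyZ (fun t => F (x, t)) ∨ PropertyZ (fun t => F (t, y))) :
    ∀ x y : X, 0 ≤ F (x, y) := by
  intro x y
  by_contra! h
  -- The diagonal is non-negative since `F (t, t) ≥ F (t, t) ^ 2`, so both sections through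
  -- `(x, y)` change sign; a zero of either one factors `F (x, y)` through `0`.
  have hdiag : ∀ t, 0 ≤ F (t, t) := fun t => (mul_self_nonneg _).trans (hineq t t t)
  rcases hZ x y with hz | hz
  · obtain ⟨z, hz⟩ := hz ⟨y, x, h.le, hdiag x⟩
    have h1 := hineq x z y
    simp only at hz
    rw [hz, zero_mul] at h1
    linarith
  · obtain ⟨z, hz⟩ := hz ⟨x, y, h.le, hdiag y⟩
    have h1 := hineq x z y
    simp only at hz
    rw [hz, mul_zero] at h1
    linarith
end

section
/- Let X be a topological space and let F : X × X → ℝ be a continuous function with values in [0, +∞) satisfying the reverse multiplicative Sincov inequality F(x,z) ≥ F(x,y) · F(y,z) for all x, y, z ∈ X. Let Z = { (x,y) ∈ X × X : F(x,y) = 0 } and suppose (a,b) ∈ Z. Then either {a} × X ⊆ Z, or X × {b} ⊆ Z, or there exist nonempty open sets U₁, U₂ ⊆ X such that U₁ × {b} ∪ {a} × U₂ ⊆ Z. -/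
open Set

/-- Structure of the zero set of a continuous non-negative solution of the reverse
multiplicative Sincov inequality. -/
theorem reverse_sincov_zero_set {X : Type*} [TopologicalSpace X]
    (F : X × X → ℝ) (hF : Continuous F)
    (hnonneg : ∀ x y : X, 0 ≤ F (x, y))
    (hineq : ∀ x y z : X, F (x, z) ≥ F (x, y) * F (y, z))
    (a b : X) (hab : F (a, b) = 0) :
    ({a} ×ˢ (univ : Set X) ⊆ { p : X × X | F p = 0 }) ∨
    ((univ : Set X) ×ˢ {b} ⊆ { p : X × X | F p = 0 }) ∨
    (∃ U₁ U₂ : Set X, IsOpen U₁ ∧ U₁.Nonempty ∧ IsOpen U₂ ∧ U₂.Nonempty ∧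
      U₁ ×ˢ {b} ∪ {a} ×ˢ U₂ ⊆ { p : X × X | F p = 0 }) := by
  -- Taking `(a, y, b)` in the inequality: for each `y`, one of `F (a, y)`, `F (y, b)` vanishes.
  have key : ∀ y, F (a, y) = 0 ∨ F (y, b) = 0 := fun y =>
    mul_eq_zero.mp (le_antisymm (hab ▸ hineq a y b) (mul_nonneg (hnonneg a y) (hnonneg y b)))
  by_cases h₁ : ∀ y, F (a, y) = 0
  · left
    rintro ⟨x, y⟩ ⟨rfl, -⟩
    exact h₁ y
  by_cases h₂ : ∀ x, F (x, b) = 0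
  · right; left
    rintro ⟨x, y⟩ ⟨-, rfl⟩
    exact h₂ x
  right; right
  -- Otherwise the cozero sets of `F (a, ·)` and `F (·, b)` are nonempty and open, and each of
  -- these functions vanishes where the other does not.
  refine ⟨{y | F (a, y) ≠ 0}, {x | F (x, b) ≠ 0},
    isOpen_ne_fun (by fun_prop) continuous_const, not_forall.mp h₁,
    isOpen_ne_fun (by fun_prop) continuous_const, not_forall.mp h₂, ?_⟩
  rintro ⟨x, y⟩ (⟨hx, rfl⟩ | ⟨rfl, hy⟩)
  · exact (key x).resolve_left hx
  · exact (key y).resolve_right hy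
end

section
/- Let X be a topological space and let ℐ ⊆ 2^X be a set ideal (i.e. ℐ is closed under taking subsets and under finite unions) such that no nonempty open subset of X belongs to ℐ. Let F : X × X → ℝ be a continuous function with values in [0, +∞) satisfying the reverse multiplicative Sincov inequality F(x,z) ≥ F(x,y) · F(y,z) for all x, y, z ∈ X, let Z = { (x,y) ∈ X × X : F(x,y) = 0 }, and suppose (a,b) ∈ Z. Then either {a} × X ⊆ Z, or X × {b} ⊆ Z, or Z ∉ ℐ ⊗ ℐ, where ℐ ⊗ ℐ is the product ideal consisting of all sets A ⊆ X × X such that { x ∈ X : A[x] ∉ ℐ } ∈ ℐ with A[x] = { y ∈ X : (x,y) ∈ A }. -/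
/-! If neither alternative about lines holds, then `U = {x | 0 < F (a, x)}` and
`V = {y | 0 < F (y, b)}` are nonempty open sets. Applying the inequality twice gives
`0 = F (a, b) ≥ F (a, x) * F (x, y) * F (y, b)`, so `F` vanishes on `U ×ˢ V`. For `x ∈ U` the
section of the zero set at `x` contains `V`, hence is not in `I`; so the set of such `x`
contains `U` and is not in `I` either. -/

open Set

/-- If `ℐ` is a set ideal on `X` containing no nonempty open set, then the zero set `Z` of a
continuous non-negative solution `F` of the reverse multiplicative Sincov inequality, given
a zero `(a,b)`, either contains `{a} × X`, or `X × {b}`, or is large with respect to the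
product ideal `ℐ ⊗ ℐ`. -/
theorem reverse_sincov_zero_set_ideal {X : Type*} [TopologicalSpace X]
    (I : Set (Set X))
    (hIdown : ∀ A ∈ I, ∀ B ⊆ A, B ∈ I)
    (hIunion : ∀ A ∈ I, ∀ B ∈ I, A ∪ B ∈ I)
    (hIopen : ∀ U : Set X, IsOpen U → U.Nonempty → U ∉ I)
    (F : X × X → ℝ) (hF : Continuous F)
    (hnonneg : ∀ x y : X, 0 ≤ F (x, y))
    (hineq : ∀ x y z : X, F (x, z) ≥ F (x, y) * F (y, z))
    (a b : X) (hab : F (a, b) = 0) :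
    ({a} ×ˢ (univ : Set X) ⊆ { p : X × X | F p = 0 }) ∨
    ((univ : Set X) ×ˢ {b} ⊆ { p : X × X | F p = 0 }) ∨
    ¬ ({ x : X | { y : X | F (x, y) = 0 } ∉ I } ∈ I) := by
  by_contra! h
  obtain ⟨h1, h2, h3⟩ := h
  obtain ⟨⟨a', p⟩, ⟨ha, -⟩, hp⟩ := Set.not_subset.mp h1
  obtain ⟨⟨q, b'⟩, ⟨-, hb⟩, hq⟩ := Set.not_subset.mp h2
  obtain rfl : a' = a := ha
  obtain rfl : b' = b := hb
  have hU : IsOpen {x : X | 0 < F (a', x)} := isOpen_lt (by fun_prop) (by fun_prop)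
  have hV : IsOpen {y : X | 0 < F (y, b')} := isOpen_lt (by fun_prop) (by fun_prop)
  have hUne : {x : X | 0 < F (a', x)}.Nonempty := ⟨p, (hnonneg a' p).lt_of_ne' hp⟩
  have hVne : {y : X | 0 < F (y, b')}.Nonempty := ⟨q, (hnonneg q b').lt_of_ne' hq⟩
  refine hIopen _ hU hUne (hIdown _ h3 _ fun x hx hxI => ?_)
  refine hIopen _ hV hVne (hIdown _ hxI _ fun y hy => ?_)
  simp only [Set.mem_ofPred_eq] at hx hy ⊢
  by_contra hxy
  have hpos : 0 < F (x, y) := (hnonneg x y).lt_of_ne' hxy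
  have hxb : 0 < F (x, b') := (mul_pos hpos hy).trans_le (hineq x y b')
  exact ((mul_pos hx hxb).trans_le (hineq a' x b')).ne' hab
end

section
/- Let X be a separable topological space and let H : X × X → ℝ be a continuous function satisfying the triangle inequality H(x,z) ≤ H(x,y) + H(y,z) for all x, y, z ∈ X and such that H(x,x) = 0 for all x ∈ X. Then for all a, b ∈ X one has H(a,b) = sup { φ(a) − φ(b) : φ ∈ ℋ(H) }, where ℋ(H) = { φ : X → ℝ : φ(x) − φ(y) ≤ H(x,y) for all x, y ∈ X }. Conversely, if ℋ is a nonempty family of real functions on a nonempty set X such that for every a, b ∈ X the set { φ(a) − φ(b) : φ ∈ ℋ } is bounded above, then H : X × X → ℝ defined by H(a,b) = sup { φ(a) − φ(b) : φ ∈ ℋ } satisfies the triangle inequality H(x,z) ≤ H(x,y) + H(y,z) for all x, y, z ∈ X, vanishes on the diagonal, and ℋ ⊆ ℋ(H). -/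
/-!
For the representation, fix `b`. The function `φ = H (·, b)` satisfies
`φ x - φ y = H (x, b) - H (y, b) ≤ H (x, y)` by the triangle inequality, and
`φ a - φ b = H (a, b)` because `H (b, b) = 0`; every member of `ℋ(H)` gives at most `H (a, b)`,
so the supremum is a maximum.

For the converse, `φ x - φ z = (φ x - φ y) + (φ y - φ z) ≤ H (x, y) + H (y, z)` for each member
`φ` of the family, and taking the supremum over `φ` gives the triangle inequality.
-/

/-- Representation of continuous solutions of the triangle inequality vanishing on the
diagonal on a separable space: `H(a,b) = sup { φ(a) − φ(b) : φ ∈ ℋ(H) }`; together with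
the converse statement: a pointwise supremum of differences over an arbitrary family of
real functions (when finite) solves the triangle inequality, vanishes on the diagonal and
the family is contained in `ℋ(H)`. -/
theorem triangle_sup_representation :
    (∀ (X : Type) [TopologicalSpace X] [TopologicalSpace.SeparableSpace X]
      (H : X × X → ℝ), Continuous H →
      (∀ x y z : X, H (x, z) ≤ H (x, y) + H (y, z)) →
      (∀ x : X, H (x, x) = 0) →
      ∀ a b : X, H (a, b) = sSup { r : ℝ | ∃ φ : X → ℝ,
        (∀ x y : X, φ x - φ y ≤ H (x, y)) ∧ r = φ a - φ b }) ∧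
    (∀ (X : Type) [Nonempty X] (ℋ : Set (X → ℝ)), ℋ.Nonempty →
      (∀ a b : X, BddAbove { r : ℝ | ∃ φ ∈ ℋ, r = φ a - φ b }) →
      ∀ (H : X × X → ℝ),
      (∀ a b : X, H (a, b) = sSup { r : ℝ | ∃ φ ∈ ℋ, r = φ a - φ b }) →
      (∀ x y z : X, H (x, z) ≤ H (x, y) + H (y, z)) ∧
      (∀ x : X, H (x, x) = 0) ∧
      (∀ φ ∈ ℋ, ∀ x y : X, φ x - φ y ≤ H (x, y))) := by
  constructor
  · intro X _ _ H _ htri hdiag a b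
    -- The supremum is attained at `φ = H (·, b)`, which lies in `ℋ(H)` by the triangle inequality.
    symm
    refine IsGreatest.csSup_eq ⟨⟨fun x => H (x, b), fun x y => ?_, ?_⟩, ?_⟩
    · linarith [htri x y b]
    · simp [hdiag b]
    · rintro r ⟨φ, hφ, rfl⟩
      exact hφ a b
  · intro X _ ℋ ⟨φ₀, hφ₀⟩ hbdd H hH
    have hle : ∀ φ ∈ ℋ, ∀ x y : X, φ x - φ y ≤ H (x, y) := fun φ hφ x y => by
      rw [hH]
      exact le_csSup (hbdd x y) ⟨φ, hφ, rfl⟩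
    have hsup : ∀ (x y : X) (c : ℝ), (∀ φ ∈ ℋ, φ x - φ y ≤ c) → H (x, y) ≤ c := by
      intro x y c hc
      rw [hH]
      refine csSup_le ⟨_, φ₀, hφ₀, rfl⟩ ?_
      rintro r ⟨φ, hφ, rfl⟩
      exact hc φ hφ
    refine ⟨fun x y z => hsup x z _ fun φ hφ => ?_, fun x => le_antisymm ?_ ?_, hle⟩
    · linarith [hle φ hφ x y, hle φ hφ y z]
    · exact hsup x x 0 fun φ _ => (sub_self (φ x)).le
    · simpa using hle φ₀ hφ₀ x x
end
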